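/- Let R be a positively graded ring with R_0 a field, f a homogeneous non-zero-divisor in a graded ideal I with deg f = indeg(I), and g ∈ I⁻¹ homogeneous with f g a unit of R. Then the multiplication map ψ : R(−indeg(I)) → I sending 1 to (fg)⁻¹ f, composed with multiplication by g, is the identity on R(−indeg(I)); hence R(−indeg(I)) is a direct summand of I as a graded R-module. -/

import Mathlib

/-!
The degree-zero unit `u = f g` has its inverse in degree zero: comparing components of degree zero
in `u u⁻¹ = 1` shows that `u⁻¹` equals its own degree-zero component. So `u⁻¹ f` is still
homogeneous of degree `d`, and multiplication by `g` sends it to `u⁻¹ u = 1`; the homomorphism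
from the free module `R` taking `1` to `u⁻¹ f` is therefore a graded section of multiplication
by `g`.
-/

theorem inv_mem_graded_zero {ι A σ : Type*} [DecidableEq ι] [AddMonoid ι] [Semiring A]
    [SetLike σ A] [AddSubmonoidClass σ A] (𝒜 : ι → σ) [GradedRing 𝒜] {u : Aˣ}
    (hu : (u : A) ∈ 𝒜 0) : (↑u⁻¹ : A) ∈ 𝒜 0 := by
  have mul_component : (u : A) * DirectSum.decompose 𝒜 (↑u⁻¹ : A) 0 = 1 := by
    rw [← DirectSum.coe_decompose_mul_of_left_mem_zero 𝒜 hu, u.mul_inv,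
      DirectSum.decompose_of_mem_same 𝒜 (SetLike.one_mem_graded 𝒜)]
  rw [Units.inv_eq_of_mul_eq_one_right mul_component]
  exact SetLike.coe_mem _

theorem comp_toSpanSingleton_inv_smul {R M : Type*} [Semiring R] [AddCommMonoid M] [Module R M]
    (φ : M →ₗ[R] R) (u : Rˣ) {m : M} (hm : φ m = u) :
    φ ∘ₗ LinearMap.toSpanSingleton R M ((↑u⁻¹ : R) • m) = LinearMap.id :=
  LinearMap.ext_ring <| by
    rw [LinearMap.comp_apply, LinearMap.toSpanSingleton_apply_one, map_smul, hm, smul_eq_mul,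
      u.inv_mul, LinearMap.id_apply]

section MulByInverse

variable {R K : Type*} [CommSemiring R] [Semiring K] [Algebra R K] [FaithfulSMul R K]
  {I : Ideal R} {g : K}

/-- Multiplication by `g ∈ I⁻¹` as an `R`-linear map `I → R`. The total quotient ring is replaced
by any `R`-algebra `K` into which `R` embeds, and `g ∈ I⁻¹` is spelled out as `g I ⊆ R`. -/
noncomputable def mulByInverse
    (hg : ∀ a ∈ I, ∃ r : R, g * algebraMap R K a = algebraMap R K r) : I →ₗ[R] R :=
  LinearMap.codRestrictOfInjective
    (LinearMap.mulLeft R g ∘ₗ Algebra.linearMap R K ∘ₗ I.subtype) (Algebra.linearMap R K)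
    (FaithfulSMul.algebraMap_injective R K) fun a => (hg a a.2).imp fun _ => Eq.symm

theorem algebraMap_mulByInverse
    (hg : ∀ a ∈ I, ∃ r : R, g * algebraMap R K a = algebraMap R K r) (a : I) :
    algebraMap R K (mulByInverse hg a) = g * algebraMap R K a :=
  LinearMap.codRestrictOfInjective_comp_apply _ (Algebra.linearMap R K) _ _ a

theorem mulByInverse_eq_iff
    (hg : ∀ a ∈ I, ∃ r : R, g * algebraMap R K a = algebraMap R K r) {a : I} {r : R} :
    mulByInverse hg a = r ↔ g * algebraMap R K a = algebraMap R K r := by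
  rw [← algebraMap_mulByInverse hg, (FaithfulSMul.algebraMap_injective R K).eq_iff]

end MulByInverse

theorem stmt19_general {ι R K σ : Type*} [DecidableEq ι] [AddMonoid ι] [CommSemiring R]
    [SetLike σ R] [AddSubmonoidClass σ R] (𝒜 : ι → σ) [GradedRing 𝒜]
    [Semiring K] [Algebra R K] [FaithfulSMul R K]
    {I : Ideal R} {d : ι} {f : R} (hfI : f ∈ I) (hfd : f ∈ 𝒜 d) {g : K}
    (hgI : ∀ a ∈ I, ∃ r : R, g * algebraMap R K a = algebraMap R K r)
    (hghom : ∀ n, ∀ a ∈ I, a ∈ 𝒜 (n + d) → ∀ r : R,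
      g * algebraMap R K a = algebraMap R K r → r ∈ 𝒜 n)
    (u : Rˣ) (hu : algebraMap R K u = algebraMap R K f * g) :
    ∃ (φ : I →ₗ[R] R) (ψ : R →ₗ[R] I),
      (∀ a : I, algebraMap R K (φ a) = g * algebraMap R K a) ∧
      (ψ 1 : R) = ↑u⁻¹ * f ∧
      φ ∘ₗ ψ = LinearMap.id ∧
      (ψ 1 : R) ∈ 𝒜 d ∧
      ∀ n (a : I), (a : R) ∈ 𝒜 (n + d) → φ a ∈ 𝒜 n := by
  have hgf : g * algebraMap R K f = algebraMap R K u := by rw [hu, Algebra.commutes]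
  have hu0 : (u : R) ∈ 𝒜 0 := hghom 0 f hfI (by rwa [zero_add]) u hgf
  let ψ := LinearMap.toSpanSingleton R I ((↑u⁻¹ : R) • ⟨f, hfI⟩)
  have hψ : (ψ 1 : R) = ↑u⁻¹ * f := congrArg Subtype.val (LinearMap.toSpanSingleton_apply_one ..)
  have hψd : (ψ 1 : R) ∈ 𝒜 d := by
    simpa only [hψ, zero_add] using SetLike.mul_mem_graded (inv_mem_graded_zero 𝒜 hu0) hfd
  exact ⟨mulByInverse hgI, ψ, algebraMap_mulByInverse hgI, hψ,
    comp_toSpanSingleton_inv_smul _ u ((mulByInverse_eq_iff hgI).2 hgf), hψd,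
    fun n a ha => hghom n a a.2 ha _ (algebraMap_mulByInverse hgI a).symm⟩

/-- R positively graded with R₀ a field, f a homogeneous
non-zero-divisor in a graded ideal I with deg f = d = indeg(I), and g ∈ I⁻¹
homogeneous (of degree −d) such that f·g is a unit u of R.  Then multiplication
ψ : R(−d) → I, 1 ↦ (fg)⁻¹ f, composed with the multiplication-by-g map
φ : I → R(−d), is the identity on R(−d); hence R(−d) is a direct summand of I
as a graded R-module.  (g lives in the total quotient ring Q(R); "g ∈ I⁻¹" means
g·I ⊆ R, and homogeneity of g of degree −d means g·(I ∩ 𝒜 n) ⊆ 𝒜 (n−d).) -/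
theorem stmt19 (R : Type*) [CommRing R] (𝒜 : ℕ → AddSubgroup R) [GradedRing 𝒜]
    (hfield : ∀ x ∈ 𝒜 0, x ≠ 0 → ∃ y ∈ 𝒜 0, x * y = 1)
    (I : Ideal R)
    (hIhom : ∀ (i : ℕ) (x : R), x ∈ I → (DirectSum.decompose 𝒜 x i : R) ∈ I)
    (d : ℕ) (f : R) (hfI : f ∈ I) (hfd : f ∈ 𝒜 d) (hf : f ∈ nonZeroDivisors R)
    (hdmin : ∀ i, i < d → ∀ x ∈ I, x ∈ 𝒜 i → x = 0)
    (g : Localization (nonZeroDivisors R))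
    (hgI : ∀ a ∈ I, ∃ r : R,
      g * algebraMap R (Localization (nonZeroDivisors R)) a =
        algebraMap R (Localization (nonZeroDivisors R)) r)
    (hghom : ∀ (n : ℕ), ∀ a ∈ I, a ∈ 𝒜 n → ∀ r : R,
      g * algebraMap R (Localization (nonZeroDivisors R)) a =
        algebraMap R (Localization (nonZeroDivisors R)) r → r ∈ 𝒜 (n - d))
    (u : R)
    (hu : algebraMap R (Localization (nonZeroDivisors R)) u =
      algebraMap R (Localization (nonZeroDivisors R)) f * g)
    (huunit : IsUnit u) :
    ∃ (φ : ↥I →ₗ[R] R) (ψ : R →ₗ[R] ↥I),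
      (∀ a : ↥I, algebraMap R (Localization (nonZeroDivisors R)) (φ a) =
        g * algebraMap R (Localization (nonZeroDivisors R)) (a : R)) ∧
      ((ψ 1 : ↥I) : R) = (↑huunit.unit⁻¹ : R) * f ∧
      φ.comp ψ = LinearMap.id ∧
      ((ψ 1 : ↥I) : R) ∈ 𝒜 d ∧
      (∀ (n : ℕ) (a : ↥I), (a : R) ∈ 𝒜 (n + d) → φ a ∈ 𝒜 n) :=
  stmt19_general 𝒜 hfI hfd hgI
    (fun n a ha hn r hr => by simpa using hghom (n + d) a ha hn r hr)
    huunit.unit hu
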